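/- arXiv:2004.04550 — 2 statements merged into one kernel-verified Lean document; each statement's English description precedes it below -/
import Mathlib

section
/- Let q be a prime power, let F be a finite field with q elements, fix ε ∈ {1, −1} and an integer d ≥ 3 such that d divides q + ε, and let g be an element of PGL₂(F) of order d. Then the centralizer of g in PGL₂(F) is a cyclic group of order q + ε. -/
/-- `PGL₂(F)`: the quotient of `GL₂(F)` by its center. -/
abbrev PGL2 (F : Type*) [Field F] := GL (Fin 2) F ⧸ Subgroup.center (GL (Fin 2) F)

open Matrix in
theorem Matrix.exists_eq_smul_one_add_smul_of_commute {F : Type*} [Field F]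
    {A B : Matrix (Fin 2) (Fin 2) F} (hA : ∀ u : F, A ≠ u • 1) (hAB : B * A = A * B) :
    ∃ a b : F, B = a • 1 + b • A := by
  have h00 := congrFun₂ hAB 0 0
  have h01 := congrFun₂ hAB 0 1
  have h10 := congrFun₂ hAB 1 0
  simp only [mul_apply, Fin.sum_univ_two] at h00 h01 h10
  suffices H : ∃ b : F, B 0 1 = b * A 0 1 ∧ B 1 0 = b * A 1 0 ∧
      B 0 0 - B 1 1 = b * (A 0 0 - A 1 1) by
    obtain ⟨b, h1, h2, h3⟩ := H
    refine ⟨B 0 0 - b * A 0 0, b, ?_⟩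
    ext i j
    fin_cases i <;> fin_cases j <;> simp [h1, h2]
    linear_combination -h3
  by_cases h1 : A 0 1 = 0
  · by_cases h2 : A 1 0 = 0
    · have h3 : A 0 0 - A 1 1 ≠ 0 := by
        intro h3
        refine hA (A 0 0) ?_
        ext i j
        fin_cases i <;> fin_cases j <;> simp [h1, h2]
        linear_combination -h3
      refine ⟨(B 0 0 - B 1 1) / (A 0 0 - A 1 1), ?_, ?_, ?_⟩
      · have : B 0 1 * (A 0 0 - A 1 1) = 0 := by
          linear_combination -h01 + (B 0 0 - B 1 1) * h1
        simpa [h1, h3] using this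
      · have : B 1 0 * (A 0 0 - A 1 1) = 0 := by
          linear_combination h10 - (B 1 1 - B 0 0) * h2
        simpa [h2, h3] using this
      · field_simp
    · refine ⟨B 1 0 / A 1 0, ?_, ?_, ?_⟩ <;> field_simp
      · linear_combination h00
      · linear_combination -h10
  · refine ⟨B 0 1 / A 0 1, ?_, ?_, ?_⟩ <;> field_simp
    · linear_combination -h00
    · linear_combination h01

theorem Matrix.sq_eq_trace_smul_sub_det_smul {F : Type*} [Field F]
    (A : Matrix (Fin 2) (Fin 2) F) : A * A = A.trace • A - A.det • 1 := by
  ext i j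
  fin_cases i <;> fin_cases j <;>
    simp [Matrix.mul_apply, Fin.sum_univ_two, Matrix.trace_fin_two, Matrix.det_fin_two] <;> ring

theorem Matrix.det_smul_one_add_smul {F : Type*} [Field F]
    (A : Matrix (Fin 2) (Fin 2) F) (a b : F) :
    (a • 1 + b • A).det = a ^ 2 + a * b * A.trace + b ^ 2 * A.det := by
  simp [Matrix.trace_fin_two, Matrix.det_fin_two]
  ring

theorem Matrix.smul_one_add_smul_mul {F : Type*} [Field F]
    (A : Matrix (Fin 2) (Fin 2) F) (a b x y : F) :
    (a • 1 + b • A) * (x • 1 + y • A) =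
      (a * x - b * y * A.det) • 1 + (a * y + b * x + b * y * A.trace) • A := by
  have h : (a • 1 + b • A) * (x • 1 + y • A) =
      (a * x) • 1 + (a * y + b * x) • A + (b * y) • (A * A) := by
    simp only [add_mul, mul_add, smul_mul_smul_comm, one_mul, mul_one]
    module
  rw [h, Matrix.sq_eq_trace_smul_sub_det_smul]
  module

theorem Matrix.smul_one_add_smul_injective {F : Type*} [Field F]
    {A : Matrix (Fin 2) (Fin 2) F} (hA : ∀ u : F, A ≠ u • 1) {a b x y : F}
    (h : a • 1 + b • A = x • 1 + y • A) : a = x ∧ b = y := by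
  have hb : b = y := by
    by_contra hb
    have hb' : b - y ≠ 0 := sub_ne_zero.2 hb
    refine hA ((b - y)⁻¹ * (x - a)) ?_
    rw [mul_smul, eq_inv_smul_iff₀ hb', sub_smul, sub_smul, sub_eq_sub_iff_add_eq_add,
      add_comm (b • A), h, add_comm]
  subst hb
  refine ⟨?_, rfl⟩
  have h' : a • (1 : Matrix (Fin 2) (Fin 2) F) = x • 1 := add_right_cancel h
  have := congrFun₂ h' 0 0
  simpa using this

namespace PGL2

variable {F : Type*} [Field F]

theorem mk_eq_mk_iff {B C : GL (Fin 2) F} :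
    (B : PGL2 F) = (C : PGL2 F) ↔ ∃ u : F, u ≠ 0 ∧ C.val = u • B.val := by
  rw [QuotientGroup.eq, Matrix.GeneralLinearGroup.mem_center_iff_val_mem_range_scalar]
  constructor
  · rintro ⟨u, hu⟩
    have h : C.val = u • B.val := by
      have : C.val = B.val * (B⁻¹ * C).val := by rw [← Units.val_mul, mul_inv_cancel_left]
      rw [this, ← hu, Matrix.scalar_apply, ← Matrix.smul_one_eq_diagonal, mul_smul_comm, mul_one]
    refine ⟨u, ?_, h⟩
    rintro rfl
    exact C.ne_zero (by rw [h, zero_smul])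
  · rintro ⟨u, -, h⟩
    refine ⟨u, ?_⟩
    rw [Units.val_mul, h, mul_smul_comm, Units.inv_mul, Matrix.scalar_apply,
      Matrix.smul_one_eq_diagonal]

/-- The class `c` is represented by the invertible matrix `a + b A`. -/
def IsRep (A : Matrix (Fin 2) (Fin 2) F) (c : PGL2 F) (a b : F) : Prop :=
  ∃ B : GL (Fin 2) F, (B : PGL2 F) = c ∧ B.val = a • 1 + b • A

namespace IsRep

variable {A : Matrix (Fin 2) (Fin 2) F} {c c' : PGL2 F} {a b x y : F}

theorem one : IsRep A 1 1 0 := ⟨1, rfl, by simp⟩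

theorem mul (h : IsRep A c a b) (h' : IsRep A c' x y) :
    IsRep A (c * c') (a * x - b * y * A.det) (a * y + b * x + b * y * A.trace) := by
  obtain ⟨B, rfl, hB⟩ := h
  obtain ⟨B', rfl, hB'⟩ := h'
  exact ⟨B * B', rfl, by rw [Units.val_mul, hB, hB', Matrix.smul_one_add_smul_mul]⟩

theorem norm_ne_zero (h : IsRep A c a b) : a ^ 2 + a * b * A.trace + b ^ 2 * A.det ≠ 0 := by
  obtain ⟨B, -, hB⟩ := h
  rw [← Matrix.det_smul_one_add_smul, ← hB]
  exact B.isUnit.map Matrix.detMonoidHom |>.ne_zero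

theorem eq_iff (hA : ∀ u : F, A ≠ u • 1) (h : IsRep A c a b) (h' : IsRep A c' x y) :
    c = c' ↔ a * y = b * x := by
  have hn := h.norm_ne_zero
  have hn' := h'.norm_ne_zero
  obtain ⟨B, rfl, hB⟩ := h
  obtain ⟨B', rfl, hB'⟩ := h'
  rw [mk_eq_mk_iff, hB, hB']
  constructor
  · rintro ⟨u, -, hu⟩
    rw [smul_add, smul_smul, smul_smul] at hu
    obtain ⟨rfl, rfl⟩ := Matrix.smul_one_add_smul_injective hA hu
    ring
  · intro hab
    suffices H : ∃ u : F, x = u * a ∧ y = u * b by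
      obtain ⟨u, rfl, rfl⟩ := H
      refine ⟨u, ?_, by rw [smul_add, smul_smul, smul_smul]⟩
      rintro rfl
      simp at hn'
    by_cases hb : b = 0
    · have ha : a ≠ 0 := by
        rintro rfl
        simp [hb] at hn
      refine ⟨x / a, by field_simp, ?_⟩
      subst hb
      simpa [ha] using hab
    · refine ⟨y / b, ?_, by field_simp⟩
      field_simp
      linear_combination -hab

theorem mem_centralizer {A : GL (Fin 2) F} (h : IsRep A.val c a b) :
    c ∈ Subgroup.centralizer ({(A : PGL2 F)} : Set (PGL2 F)) := by
  obtain ⟨B, rfl, hB⟩ := h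
  rw [Subgroup.mem_centralizer_singleton_iff, ← QuotientGroup.mk_mul, ← QuotientGroup.mk_mul]
  congr 1
  ext1
  rw [Units.val_mul, Units.val_mul, hB, add_mul, mul_add, smul_mul_assoc, smul_mul_assoc,
    mul_smul_comm, mul_smul_comm, one_mul, mul_one]

end IsRep

theorem exists_isRep_of_mem_centralizer {A : GL (Fin 2) F} (hA : ∀ u : F, A.val ≠ u • 1)
    (htr : A.val.trace ≠ 0) {c : PGL2 F}
    (hc : c ∈ Subgroup.centralizer ({(A : PGL2 F)} : Set (PGL2 F))) :
    ∃ a b : F, IsRep A.val c a b := by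
  obtain ⟨B, rfl⟩ := QuotientGroup.mk_surjective c
  rw [Subgroup.mem_centralizer_singleton_iff, ← QuotientGroup.mk_mul, ← QuotientGroup.mk_mul,
    mk_eq_mk_iff] at hc
  obtain ⟨u, hu, h⟩ := hc
  rw [Units.val_mul, Units.val_mul] at h
  have h1 : A.val.trace = u * A.val.trace := by
    have h2 : A.val = u • (B.val * A.val * (B⁻¹).val) := by
      rw [← smul_mul_assoc, ← h, mul_assoc, Units.mul_inv, mul_one]
    have h3 := congrArg Matrix.trace h2
    rwa [Matrix.trace_smul, Matrix.trace_units_conj, smul_eq_mul] at h3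
  obtain rfl : u = 1 := mul_right_cancel₀ htr (by rw [← h1, one_mul])
  rw [one_smul] at h
  obtain ⟨a, b, hab⟩ := Matrix.exists_eq_smul_one_add_smul_of_commute hA h.symm
  exact ⟨a, b, B, rfl, hab⟩

theorem isCyclic_centralizer [Finite F] {A : GL (Fin 2) F} (hA : ∀ u : F, A.val ≠ u • 1)
    (htr : A.val.trace ≠ 0) (hdisc : A.val.trace ^ 2 ≠ 4 * A.val.det) :
    IsCyclic (Subgroup.centralizer ({(A : PGL2 F)} : Set (PGL2 F))) := by
  let φ := algebraMap F (AlgebraicClosure F)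
  obtain ⟨α, hα⟩ : ∃ α : AlgebraicClosure F,
      α ^ 2 - φ A.val.trace * α + φ A.val.det = 0 := by
    open Polynomial in
    obtain ⟨α, hα⟩ := IsAlgClosed.exists_root
      (X ^ 2 - C (φ A.val.trace) * X + C (φ A.val.det)) (by
        have : (X ^ 2 - C (φ A.val.trace) * X + C (φ A.val.det)).degree = 2 := by compute_degree!
        rw [this]
        decide)
    exact ⟨α, by simpa [IsRoot] using hα⟩
  obtain ⟨β, hβ⟩ : ∃ β, β = φ A.val.trace - α := ⟨_, rfl⟩
  have htrace : φ A.val.trace = α + β := by rw [hβ]; ring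
  have hdet : φ A.val.det = α * β := by rw [hβ]; linear_combination hα
  have hne : α - β ≠ 0 := by
    intro h
    apply hdisc
    apply φ.injective
    rw [map_pow, map_mul, htrace, hdet, map_ofNat]
    linear_combination (α - β) * h
  have hnorm {c : PGL2 F} {a b : F} (h : IsRep A.val c a b) : φ a + φ b * β ≠ 0 := by
    intro h0
    apply h.norm_ne_zero
    apply φ.injective
    simp only [map_add, map_mul, map_pow, map_zero, htrace, hdet]
    linear_combination (φ a + φ b * α) * h0
  have hratio {c c' : PGL2 F} {a b x y : F} (h : IsRep A.val c a b) (h' : IsRep A.val c' x y) :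
      (φ a + φ b * α) / (φ a + φ b * β) = (φ x + φ y * α) / (φ x + φ y * β) ↔ c = c' := by
    rw [h.eq_iff hA h', div_eq_div_iff (hnorm h) (hnorm h'), ← φ.injective.eq_iff, map_mul,
      map_mul]
    constructor
    · intro H
      apply mul_right_cancel₀ hne
      linear_combination -H
    · intro H
      linear_combination (β - α) * H
  choose a b hab using fun c : Subgroup.centralizer ({(A : PGL2 F)} : Set (PGL2 F)) =>
    exists_isRep_of_mem_centralizer hA htr c.2
  let χ : Subgroup.centralizer ({(A : PGL2 F)} : Set (PGL2 F)) →* AlgebraicClosure F :=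
    { toFun := fun c => (φ (a c) + φ (b c) * α) / (φ (a c) + φ (b c) * β)
      map_one' := by
        rw [(hratio (hab 1) IsRep.one).2 rfl]
        simp
      map_mul' := fun c c' => by
        rw [(hratio (hab (c * c')) ((hab c).mul (hab c'))).2 rfl, div_mul_div_comm]
        simp only [map_add, map_sub, map_mul, htrace, hdet]
        congr 1 <;> ring }
  refine isCyclic_of_injective_ringHom χ fun c c' h => Subtype.ext ?_
  exact (hratio (hab c) (hab c')).1 h

open Classical in
theorem card_centralizer_add_card_roots [Fintype F] {A : GL (Fin 2) F}
    (hA : ∀ u : F, A.val ≠ u • 1) (htr : A.val.trace ≠ 0) :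
    Nat.card (Subgroup.centralizer ({(A : PGL2 F)} : Set (PGL2 F))) +
      (Finset.univ.filter fun a : F => a ^ 2 + a * A.val.trace + A.val.det = 0).card =
      Fintype.card F + 1 := by
  have hrep (a : {a : F // ¬ a ^ 2 + a * A.val.trace + A.val.det = 0}) :
      ∃ c, IsRep A.val c a 1 := by
    have : IsUnit (a.1 • 1 + (1 : F) • A.val).det := by
      rw [Matrix.det_smul_one_add_smul]
      simpa using a.2
    exact ⟨_, Matrix.GeneralLinearGroup.mk'' _ this, rfl, rfl⟩
  choose f hf using hrep
  let e : Option {a : F // ¬ a ^ 2 + a * A.val.trace + A.val.det = 0} →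
      Subgroup.centralizer ({(A : PGL2 F)} : Set (PGL2 F)) :=
    fun o => o.elim 1 fun a => ⟨f a, (hf a).mem_centralizer⟩
  have he : Function.Bijective e := by
    constructor
    · rintro (_ | a) (_ | a') h
      · rfl
      · simpa using (IsRep.one.eq_iff hA (hf a')).1 (congrArg Subtype.val h)
      · simpa using ((hf a).eq_iff hA IsRep.one).1 (congrArg Subtype.val h)
      · have := ((hf a).eq_iff hA (hf a')).1 (congrArg Subtype.val h)
        simp only [mul_one, one_mul] at this
        rw [Subtype.ext this]
    · rintro ⟨c, hc⟩
      obtain ⟨a, b, hab⟩ := exists_isRep_of_mem_centralizer hA htr hc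
      by_cases hb : b = 0
      · refine ⟨none, Subtype.ext ?_⟩
        exact (IsRep.one.eq_iff hA hab).2 (by simp [hb])
      · refine ⟨some ⟨a / b, fun h => hab.norm_ne_zero ?_⟩, Subtype.ext ?_⟩
        · field_simp at h
          linear_combination h
        · exact ((hf _).eq_iff hA hab).2 (by field_simp)
  rw [← Nat.card_eq_of_bijective e he, Nat.card_eq_fintype_card, Fintype.card_option,
    Fintype.card_subtype_compl, Fintype.card_subtype]
  have := Finset.card_le_univ
    (Finset.univ.filter fun a : F => a ^ 2 + a * A.val.trace + A.val.det = 0)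
  omega

open Classical in
theorem card_roots_trichotomy [Fintype F] {t D : F} (ht : t ≠ 0) :
    let n := (Finset.univ.filter fun a : F => a ^ 2 + a * t + D = 0).card
    n = 1 ∨ ((n = 0 ∨ n = 2) ∧ t ^ 2 ≠ 4 * D) := by
  intro n
  by_cases hdisc : t ^ 2 = 4 * D
  · left
    have h2 : (2 : F) ≠ 0 := by
      intro h2
      apply ht
      rw [← sq_eq_zero_iff, hdisc]
      linear_combination 2 * D * h2
    rw [Finset.card_eq_one]
    refine ⟨-t / 2, ?_⟩
    ext a
    have : a ^ 2 + a * t + D = (a - -t / 2) ^ 2 := by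
      field_simp
      linear_combination -hdisc
    simp [this, sub_eq_zero]
  · right
    refine ⟨?_, hdisc⟩
    by_cases h : ∃ r : F, r ^ 2 + r * t + D = 0
    · right
      obtain ⟨r, hr⟩ := h
      refine Finset.card_eq_two.2 ⟨r, -t - r, ?_, ?_⟩
      · intro h
        apply hdisc
        linear_combination -4 * hr + (2 * r - t + 2 * t) * h
      · ext a
        have : a ^ 2 + a * t + D = (a - r) * (a - (-t - r)) := by linear_combination hr
        simp [this, sub_eq_zero]
    · left
      simpa [n, Finset.filter_eq_empty_iff] using h

end PGL2

/-- Let `F` be a finite field with `q` elements (`q` a prime power), `ε = ±1`, `d ≥ 3` with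
`d ∣ q + ε`, and `g ∈ PGL₂(F)` of order `d`.  Then the centralizer of `g` in `PGL₂(F)` is
cyclic of order `q + ε`. -/
theorem PGL2_centralizer_cyclic (q : ℕ) (hq : IsPrimePow q)
    (F : Type*) [Field F] [Fintype F] (hF : Fintype.card F = q)
    (ε : ℤ) (hε : ε = 1 ∨ ε = -1) (d : ℕ) (hd : 3 ≤ d) (hdvd : (d : ℤ) ∣ (q : ℤ) + ε)
    (g : PGL2 F) (hg : orderOf g = d) :
    IsCyclic (Subgroup.centralizer ({g} : Set (PGL2 F))) ∧
    (Nat.card (Subgroup.centralizer ({g} : Set (PGL2 F))) : ℤ) = (q : ℤ) + ε := by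
  classical
  obtain ⟨A, rfl⟩ := QuotientGroup.mk_surjective g
  have hA (u : F) : A.val ≠ u • 1 := by
    intro h
    have h1 : (A : PGL2 F) = ((1 : GL (Fin 2) F) : PGL2 F) := by
      refine (PGL2.mk_eq_mk_iff.2 ⟨u, ?_, h⟩).symm
      rintro rfl
      exact A.ne_zero (by rw [h, zero_smul])
    rw [QuotientGroup.mk_one] at h1
    rw [h1, orderOf_one] at hg
    omega
  have htr : A.val.trace ≠ 0 := by
    intro h
    have hsq : A.val * A.val = (-A.val.det) • 1 := by
      rw [Matrix.sq_eq_trace_smul_sub_det_smul, h]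
      module
    have h1 : ((A * A : GL (Fin 2) F) : PGL2 F) = ((1 : GL (Fin 2) F) : PGL2 F) := by
      refine (PGL2.mk_eq_mk_iff.2 ⟨-A.val.det, ?_, hsq⟩).symm
      exact neg_ne_zero.2 (A.isUnit.map Matrix.detMonoidHom).ne_zero
    have h2 : (A : PGL2 F) ^ 2 = 1 := by rw [pow_two]; exact h1
    have := Nat.le_of_dvd two_pos (orderOf_dvd_of_pow_eq_one h2)
    omega
  have hdC : d ∣ Nat.card (Subgroup.centralizer ({(A : PGL2 F)} : Set (PGL2 F))) := by
    rw [← hg, ← Subgroup.orderOf_mk (A : PGL2 F)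
      (Subgroup.mem_centralizer_singleton_iff.2 rfl)]
    exact orderOf_dvd_natCard _
  have hcard := PGL2.card_centralizer_add_card_roots hA htr
  rw [hF] at hcard
  generalize hN : Nat.card (Subgroup.centralizer ({(A : PGL2 F)} : Set (PGL2 F))) = N at *
  have hdN : (d : ℤ) ∣ (q : ℤ) + ε - N := dvd_sub hdvd (Int.natCast_dvd_natCast.2 hdC)
  have hsmall : |(q : ℤ) + ε - N| < d → (q : ℤ) + ε - N = 0 :=
    Int.eq_zero_of_abs_lt_dvd hdN
  rcases PGL2.card_roots_trichotomy (D := A.val.det) htr with hn | ⟨hn, hdisc⟩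
  · rw [hn] at hcard
    have := hsmall (by rw [abs_lt]; omega)
    omega
  · refine ⟨PGL2.isCyclic_centralizer hA htr hdisc, ?_⟩
    have := hsmall (by rw [abs_lt]; omega)
    omega
end

section
/- Let q be a prime power, let F be a finite field with q elements, fix ε ∈ {1, −1} and an integer d ≥ 3 such that d divides q + ε, and let g be an element of PGL₂(F) of order d. Then g is a power of an element of order q + ε: there exists h ∈ PGL₂(F) with order of h equal to q + ε such that g lies in the cyclic subgroup generated by h. -/
open Polynomial

/-- The image of a cyclic group under a homomorphism is generated by a single element. -/
theorem MonoidHom.exists_range_eq_zpowers {C G : Type*} [Group C] [IsCyclic C] [Group G]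
    (f : C →* G) : ∃ h : G, orderOf h = Nat.card f.range ∧ ∀ c, f c ∈ Subgroup.zpowers h := by
  obtain ⟨γ, hγ⟩ := IsCyclic.exists_generator (α := C)
  have hf : f.range = Subgroup.zpowers (f γ) := by
    rw [← MonoidHom.map_zpowers, (Subgroup.eq_top_iff' _).2 hγ, MonoidHom.range_eq_map]
  exact ⟨f γ, by rw [hf, Nat.card_zpowers], fun c => hf ▸ ⟨c, rfl⟩⟩

namespace PGL2

variable {F : Type*} [Field F]

theorem mk_eq_one_iff (A : GL (Fin 2) F) :
    (A : PGL2 F) = 1 ↔ ∃ c : F, algebraMap F (Matrix (Fin 2) (Fin 2) F) c = A.val := by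
  rw [QuotientGroup.eq_one_iff, Matrix.GeneralLinearGroup.mem_center_iff_val_mem_range_scalar]
  rfl

theorem exists_orderOf_eq_card_add_one [Fintype F] (A : GL (Fin 2) F)
    (hA : Irreducible A.val.charpoly) :
    ∃ h : PGL2 F, orderOf h = Fintype.card F + 1 ∧ (A : PGL2 F) ∈ Subgroup.zpowers h := by
  have : Fact (Irreducible A.val.charpoly) := ⟨hA⟩
  let K := AdjoinRoot A.val.charpoly
  have : Module.Finite F K := A.val.charpoly_monic.finite_adjoinRoot
  have : Finite K := Module.finite_of_finite F
  have hK : Nat.card K = Fintype.card F ^ 2 := by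
    have hrank : Module.finrank F K = A.val.charpoly.natDegree :=
      finrank_quotient_span_eq_natDegree
    rw [Module.natCard_eq_pow_finrank (K := F), Nat.card_eq_fintype_card, hrank,
      Matrix.charpoly_natDegree_eq_dim, Fintype.card_fin]
  let φ : K →ₐ[F] Matrix (Fin 2) (Fin 2) F :=
    Ideal.Quotient.liftₐ _ (aeval A.val) fun p hp => by
      obtain ⟨r, rfl⟩ := Ideal.mem_span_singleton.1 hp
      rw [map_mul, A.val.aeval_self_charpoly, zero_mul]
  have hφroot : φ (AdjoinRoot.root _) = A.val := aeval_X A.val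
  have hφ : Function.Injective φ := φ.toRingHom.injective
  let f : Kˣ →* PGL2 F :=
    (QuotientGroup.mk' (Subgroup.center (GL (Fin 2) F))).comp (Units.map (φ : K →* Matrix (Fin 2) (Fin 2) F))
  have hker : f.ker = (Units.map (algebraMap F K : F →* K)).range := by
    ext u
    rw [MonoidHom.mem_ker, MonoidHom.mem_range]
    refine (mk_eq_one_iff (Units.map (φ : K →* Matrix (Fin 2) (Fin 2) F) u)).trans ⟨?_, ?_⟩
    · rintro ⟨c, hc⟩
      have hcu : algebraMap F K c = u := hφ (by rw [φ.commutes, hc]; rfl)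
      have hc0 : c ≠ 0 := by
        rintro rfl
        exact u.ne_zero (by rw [← hcu, map_zero])
      exact ⟨Units.mk0 c hc0, Units.ext hcu⟩
    · rintro ⟨c, rfl⟩
      exact ⟨c, (φ.commutes _).symm⟩
  have hkercard : Nat.card f.ker = Fintype.card F - 1 := by
    have hinj : Function.Injective (Units.map (algebraMap F K : F →* K)) :=
      Units.map_injective (algebraMap F K).injective
    rw [hker, ← Nat.card_congr (MonoidHom.ofInjective hinj).toEquiv, Nat.card_units,
      Nat.card_eq_fintype_card]
  have hcard := f.ker.card_mul_index
  rw [Subgroup.index_ker, hkercard, Nat.card_units, hK] at hcard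
  obtain ⟨h, hh, hmem⟩ := f.exists_range_eq_zpowers
  have hq : 1 < Fintype.card F := Fintype.one_lt_card
  refine ⟨h, ?_, ?_⟩
  · rw [hh]
    refine Nat.eq_of_mul_eq_mul_left (Nat.sub_pos_of_lt hq) (hcard.trans ?_)
    rw [mul_comm, ← Nat.sq_sub_sq, one_pow]
  · have hroot : AdjoinRoot.root A.val.charpoly ≠ 0 := fun h0 =>
      A.ne_zero (by rw [← hφroot, h0, map_zero])
    have hfA : f (Units.mk0 _ hroot) = A := congrArg QuotientGroup.mk (Units.ext hφroot)
    exact hfA ▸ hmem _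

theorem exists_orderOf_eq_card_sub_one [Fintype F] (A : GL (Fin 2) F) (hA : (A : PGL2 F) ≠ 1)
    {a b : F} (ha : a ≠ 0) (hb : b ≠ 0) (hab : a ≠ b)
    (h0 : (A.val - algebraMap F _ a) * (A.val - algebraMap F _ b) = 0) :
    ∃ h : PGL2 F, orderOf h = Fintype.card F - 1 ∧ (A : PGL2 F) ∈ Subgroup.zpowers h := by
  have hsub : a - b ≠ 0 := sub_ne_zero.2 hab
  obtain ⟨E, hE⟩ : ∃ E, E = (a - b)⁻¹ • (A.val - algebraMap F _ b) := ⟨_, rfl⟩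
  have hAE : A.val = b • (1 + (a / b - 1) • E) := by
    have : b * (a / b - 1) = a - b := by field_simp
    rw [smul_add, smul_smul, this, hE, smul_inv_smul₀ hsub, ← Algebra.algebraMap_eq_smul_one]
    abel
  have hEE : E * E = E := by
    have : (A.val - algebraMap F _ b) * (A.val - algebraMap F _ b)
        = (a - b) • (A.val - algebraMap F _ b) := by
      rw [← sub_eq_zero, ← h0]
      simp only [Algebra.smul_def, map_sub]
      noncomm_ring
    rw [hE, smul_mul_smul_comm, this, smul_smul]
    congr 1
    field_simp
  have hEscalar : ∀ c : F, algebraMap F _ c ≠ E := by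
    rintro c rfl
    exact hA ((mk_eq_one_iff A).2 ⟨b * (1 + (a / b - 1) * c), by
      rw [hAE]; simp [Algebra.smul_def]⟩)
  let f₀ : Fˣ →* Matrix (Fin 2) (Fin 2) F :=
    { toFun := fun t => 1 + ((t : F) - 1) • E
      map_one' := by simp
      map_mul' := fun s t => by
        simp only [mul_add, add_mul, one_mul, mul_one, smul_mul_smul_comm, hEE, Units.val_mul]
        module }
  let f : Fˣ →* PGL2 F :=
    (QuotientGroup.mk' (Subgroup.center (GL (Fin 2) F))).comp f₀.toHomUnits
  have hf : Function.Injective f := by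
    rw [injective_iff_map_eq_one]
    intro t ht
    obtain ⟨c, hc⟩ := (mk_eq_one_iff _).1 ht
    replace hc : algebraMap F _ c = 1 + ((t : F) - 1) • E := hc
    by_contra ht1
    have ht1' : (t : F) - 1 ≠ 0 := sub_ne_zero.2 fun h => ht1 (Units.ext h)
    refine hEscalar (((t : F) - 1)⁻¹ * (c - 1)) ?_
    rw [map_mul, ← Algebra.smul_def, map_sub, hc, map_one, add_sub_cancel_left,
      inv_smul_smul₀ ht1']
  obtain ⟨h, hh, hmem⟩ := f.exists_range_eq_zpowers
  refine ⟨h, ?_, ?_⟩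
  · rw [hh, ← Nat.card_congr (MonoidHom.ofInjective hf).toEquiv, Nat.card_units,
      Nat.card_eq_fintype_card]
  · have hfA : f (Units.mk0 (a / b) (div_ne_zero ha hb)) = A := by
      refine QuotientGroup.eq_iff_div_mem.2 ?_
      rw [← QuotientGroup.eq_one_iff, mk_eq_one_iff]
      refine ⟨b⁻¹, ?_⟩
      rw [div_eq_mul_inv, Units.val_mul, Units.eq_mul_inv_iff_mul_eq, hAE,
        ← Algebra.smul_def, inv_smul_smul₀ hb]
      rfl
    exact hfA ▸ hmem _

theorem pow_char_eq_one (p : ℕ) [Fact p.Prime] [CharP F p] (A : GL (Fin 2) F) {a : F}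
    (h0 : (A.val - algebraMap F _ a) * (A.val - algebraMap F _ a) = 0) :
    (A : PGL2 F) ^ p = 1 := by
  rw [← QuotientGroup.mk_pow, mk_eq_one_iff]
  refine ⟨a ^ p, ?_⟩
  have hp : (A.val - algebraMap F _ a) ^ p = 0 :=
    pow_eq_zero_of_le (Fact.out : p.Prime).two_le (by rw [pow_two, h0])
  rw [sub_pow_char_of_commute _ (Algebra.commutes a A.val).symm, sub_eq_zero] at hp
  rw [map_pow, ← hp, Units.val_pow_eq_pow_val]

/-- A `2 × 2` matrix with reducible characteristic polynomial is annihilated by a product of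
two linear factors with coefficients in the field. -/
theorem exists_mul_eq_zero_of_not_irreducible (A : GL (Fin 2) F)
    (hA : ¬ Irreducible A.val.charpoly) :
    ∃ a b : F, a ≠ 0 ∧ b ≠ 0 ∧
      (A.val - algebraMap F _ a) * (A.val - algebraMap F _ b) = 0 := by
  have hdeg : A.val.charpoly.natDegree = 2 := by simp [Matrix.charpoly_natDegree_eq_dim]
  obtain ⟨b, hb⟩ : ∃ b, A.val.charpoly.IsRoot b := by
    by_contra! hroot
    exact hA (irreducible_of_degree_le_three_of_not_isRoot (by simp [hdeg]) hroot)
  have hch := A.val.aeval_self_charpoly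
  rw [Matrix.charpoly_fin_two] at hb hch
  simp only [IsRoot, eval_add, eval_sub, eval_pow, eval_X, eval_mul, eval_C] at hb
  have hdet : (A.val.trace - b) * b = A.val.det := by linear_combination -hb
  have hdet0 : A.val.det ≠ 0 := ((Matrix.isUnit_iff_isUnit_det _).1 A.isUnit).ne_zero
  rw [← hdet] at hdet0 hch
  refine ⟨A.val.trace - b, b, left_ne_zero_of_mul hdet0, right_ne_zero_of_mul hdet0, ?_⟩
  simp only [map_add, map_sub, map_mul, map_pow, aeval_X, aeval_C] at hch
  rw [← hch]
  have hcomm := Algebra.commutes b A.val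
  rw [sub_mul, mul_sub, mul_sub, ← hcomm, map_sub]
  noncomm_ring

end PGL2

/-- Let `F` be a finite field with `q` elements (`q` a prime power), `ε = ±1`, `d ≥ 3` with
`d ∣ q + ε`, and `g ∈ PGL₂(F)` of order `d`.  Then `g` is a power of an element of order
`q + ε`. -/
theorem PGL2_mem_zpowers_of_order (q : ℕ) (hq : IsPrimePow q)
    (F : Type*) [Field F] [Fintype F] (hF : Fintype.card F = q)
    (ε : ℤ) (hε : ε = 1 ∨ ε = -1) (d : ℕ) (hd : 3 ≤ d) (hdvd : (d : ℤ) ∣ (q : ℤ) + ε)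
    (g : PGL2 F) (hg : orderOf g = d) :
    ∃ h : PGL2 F, (orderOf h : ℤ) = (q : ℤ) + ε ∧ g ∈ Subgroup.zpowers h := by
  have hq1 : 1 < q := hq.one_lt
  obtain ⟨A, rfl⟩ := QuotientGroup.mk_surjective g
  have hA1 : (A : PGL2 F) ≠ 1 := by
    intro h
    rw [h, orderOf_one] at hg
    omega
  have not_both : ∀ {δ : ℤ}, (δ = 1 ∨ δ = -1) → (d : ℤ) ∣ q + δ → δ = ε := by
    intro δ hδ hdδ
    by_contra hne
    have h2 : (d : ℤ) ∣ 2 := by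
      have hsub := dvd_sub hdδ hdvd
      rw [add_sub_add_left_eq_sub] at hsub
      rcases hε with rfl | rfl <;> rcases hδ with rfl | rfl <;> simp_all
    have := Int.le_of_dvd two_pos h2
    omega
  have finish : ∀ {δ : ℤ}, (δ = 1 ∨ δ = -1) →
      (∃ h : PGL2 F, (orderOf h : ℤ) = q + δ ∧ (A : PGL2 F) ∈ Subgroup.zpowers h) →
      ∃ h : PGL2 F, (orderOf h : ℤ) = q + ε ∧ (A : PGL2 F) ∈ Subgroup.zpowers h := by
    rintro δ hδ ⟨h, hh, hmem⟩
    obtain rfl := not_both hδ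
      (by rw [← hh, ← hg]; exact_mod_cast orderOf_dvd_of_mem_zpowers hmem)
    exact ⟨h, hh, hmem⟩
  by_cases hirr : Irreducible A.val.charpoly
  · obtain ⟨h, hh, hmem⟩ := PGL2.exists_orderOf_eq_card_add_one A hirr
    exact finish (.inl rfl) ⟨h, by rw [hh, hF]; push_cast; rfl, hmem⟩
  obtain ⟨a, b, ha, hb, h0⟩ := PGL2.exists_mul_eq_zero_of_not_irreducible A hirr
  by_cases hab : a = b
  · subst hab
    obtain ⟨p, hchar, n, hp, hcard⟩ := FiniteField.card' F
    have : Fact p.Prime := ⟨hp⟩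
    have hdp : d ∣ p := hg ▸ orderOf_dvd_of_pow_eq_one (PGL2.pow_char_eq_one p A h0)
    have hpq : p ∣ q := hF ▸ hcard ▸ dvd_pow_self p n.ne_zero
    have hdε : (d : ℤ) ∣ ε :=
      (dvd_add_right (Int.natCast_dvd_natCast.2 (hdp.trans hpq))).1 hdvd
    have hd1 : d ∣ 1 := by
      rcases hε with rfl | rfl <;> simpa using Int.natCast_dvd.1 hdε
    exact absurd (Nat.le_of_dvd one_pos hd1) (by omega)
  · obtain ⟨h, hh, hmem⟩ := PGL2.exists_orderOf_eq_card_sub_one A hA1 ha hb hab h0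
    exact finish (.inr rfl) ⟨h, by rw [hh, hF]; omega, hmem⟩
end
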